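/- Consider a uniform real-valued line model: let l > 0, let i₀, ι, ζ be real numbers with i₀ ≠ 0 and ι·l ≠ 2·i₀, let v(0) ≠ 0 be the real input voltage, and set i(l) = i₀ − ι·l, v(l) = v(0) − ζ·(i₀·l − (ι/2)·l²), assumed nonzero. Define the powers p(0) = v(0)·i₀ and p(l) = v(l)·i(l), the ratios ρ_v = v(l)/v(0) and ρ_s = p(l)/p(0), the total loss λ_ms = ζ·(i₀²·l − i₀·ι·l² + (ι²/3)·l³), and ĉ = 1 − ((ρ_v − ρ_s)/(ρ_v + ρ_s))·((ρ_v + 2ρ_s)/(3ρ_v)). Then the loss fraction satisfies exactly λ_ms / p(0) = ĉ·(v(0)² − v(0)·v(l)) / v(0)². -/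

import Mathlib

/-- In the real-valued uniform line model, the exact loss fraction `λ_ms / p(0)`
equals the corrected multi-segment voss estimator `cHat·(v(0)² - v(0)·v(l))/v(0)²`. -/
theorem stmt_12 (l i₀ ι ζ v0 : ℝ) (hl : 0 < l) (hi₀ : i₀ ≠ 0)
    (hι : ι * l ≠ 2 * i₀) (hv0 : v0 ≠ 0)
    (il vl p0 pl ρv ρs lms cHat : ℝ)
    (hil : il = i₀ - ι * l)
    (hvl : vl = v0 - ζ * (i₀ * l - (ι / 2) * l ^ 2)) (hvl0 : vl ≠ 0)
    (hp0 : p0 = v0 * i₀) (hpl : pl = vl * il)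
    (hρv : ρv = vl / v0) (hρs : ρs = pl / p0)
    (hlms : lms = ζ * (i₀ ^ 2 * l - i₀ * ι * l ^ 2 + (ι ^ 2 / 3) * l ^ 3))
    (hcHat : cHat = 1 - ((ρv - ρs) / (ρv + ρs)) * ((ρv + 2 * ρs) / (3 * ρv))) :
    lms / p0 = cHat * ((v0 ^ 2 - v0 * vl) / v0 ^ 2) := by
  have hs : i₀ + il ≠ 0 := by
    intro h
    apply hι
    linarith
  have h1 : ρv ≠ 0 := by
    rw [hρv]
    exact div_ne_zero hvl0 hv0
  have h2 : ρs = ρv * (il / i₀) := by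
    rw [hρs, hρv, hpl, hp0]
    field_simp
  have h3 : ρv + ρs = ρv * (i₀ + il) / i₀ := by
    rw [h2]
    field_simp
  have hc : cHat = 2 * (i₀ ^ 2 + i₀ * il + il ^ 2) / (3 * i₀ * (i₀ + il)) := by
    rw [hcHat, h3, h2]
    field_simp
    ring
  have hd : v0 - vl = ζ * l * (i₀ + il) / 2 := by
    rw [hvl, hil]
    ring
  have he : lms = ζ * l * (i₀ ^ 2 + i₀ * il + il ^ 2) / 3 := by
    rw [hlms, hil]
    ring
  have hf : v0 ^ 2 - v0 * vl = v0 * (ζ * l * (i₀ + il) / 2) := by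
    rw [← hd]
    ring
  rw [hf, hc, he, hp0]
  field_simp
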